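/- Let n be a positive integer. Then δ(n) < δ(m) for every integer m > n if and only if either n = k² for some positive integer k (in which case δ(n) = 2k) or n = k² + k for some positive integer k (in which case δ(n) = 2k + 1). -/

import Mathlib

/-- `staircaseDelta n` is the minimum of `r + s` over all pairs of positive
integers `(r, s)` with `r ≤ s` and `r * s = n`. -/
noncomputable def staircaseDelta (n : ℕ) : ℕ :=
  sInf {w : ℕ | ∃ r s : ℕ, 0 < r ∧ r ≤ s ∧ r * s = n ∧ w = r + s}

/-!
The largest product of two natural numbers with sum `w` is `⌊w ^ 2 / 4⌋`, attained by the balanced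
splitting `w = ⌊w / 2⌋ + ⌈w / 2⌉`. Hence `n ≤ ⌊δ(n) ^ 2 / 4⌋` always, and `δ(⌊w ^ 2 / 4⌋) = w` for
`w ≥ 2`. So if the inequality is strict, then `⌊δ(n) ^ 2 / 4⌋` is a larger number with the same `δ`
as `n`; if it is an equality, then `δ(m) ≤ δ(n)` forces `m ≤ n`. The positive values of
`⌊w ^ 2 / 4⌋` are `k ^ 2` for `w = 2 * k` and `k ^ 2 + k` for `w = 2 * k + 1`.
-/

theorem sq_two_mul_div_four (k : ℕ) : (2 * k) ^ 2 / 4 = k ^ 2 := by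
  rw [mul_pow]
  exact Nat.mul_div_cancel_left _ (by norm_num)

theorem sq_two_mul_add_one_div_four (k : ℕ) : (2 * k + 1) ^ 2 / 4 = k ^ 2 + k := by
  rw [show (2 * k + 1) ^ 2 = 1 + 4 * (k ^ 2 + k) by ring, Nat.add_mul_div_left _ _ (by norm_num)]
  exact zero_add _

theorem div_two_mul_add_one_div_two (w : ℕ) : w / 2 * ((w + 1) / 2) = w ^ 2 / 4 := by
  obtain ⟨k, rfl | rfl⟩ := w.even_or_odd'
  · rw [sq_two_mul_div_four, show 2 * k / 2 = k by omega, show (2 * k + 1) / 2 = k by omega, sq]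
  · rw [sq_two_mul_add_one_div_four, show (2 * k + 1) / 2 = k by omega,
      show (2 * k + 1 + 1) / 2 = k + 1 by omega]
    ring

theorem mul_le_sq_add_div_four (r s : ℕ) : r * s ≤ (r + s) ^ 2 / 4 := by
  rw [Nat.le_div_iff_mul_le (by norm_num), mul_comm, ← mul_assoc]
  exact four_mul_le_sq_add r s

theorem sq_div_four_lt_sq_div_four {d w : ℕ} (hw : 2 ≤ w) (h : d < w) :
    d ^ 2 / 4 < w ^ 2 / 4 := by
  rw [← div_two_mul_add_one_div_two, ← div_two_mul_add_one_div_two]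
  obtain hhalf | hhalf : d / 2 < w / 2 ∨ (d + 1) / 2 < (w + 1) / 2 := by omega
  · exact Nat.mul_lt_mul_of_lt_of_le hhalf (by omega) (by omega)
  · exact Nat.mul_lt_mul_of_le_of_lt (by omega) hhalf (by omega)

theorem exists_staircaseDelta_eq_add {n : ℕ} (hn : 0 < n) :
    ∃ r s : ℕ, 0 < r ∧ r ≤ s ∧ r * s = n ∧ staircaseDelta n = r + s :=
  Nat.sInf_mem (s := {w | ∃ r s : ℕ, 0 < r ∧ r ≤ s ∧ r * s = n ∧ w = r + s})
    ⟨1 + n, 1, n, one_pos, hn, one_mul n, rfl⟩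

theorem staircaseDelta_mul_le_add {r s : ℕ} (hr : 0 < r) (hs : 0 < s) :
    staircaseDelta (r * s) ≤ r + s := by
  wlog hrs : r ≤ s generalizing r s
  · rw [mul_comm, add_comm]
    exact this hs hr (le_of_not_ge hrs)
  exact Nat.sInf_le ⟨r, s, hr, hrs, rfl, rfl⟩

theorem le_sq_staircaseDelta_div_four {n : ℕ} (hn : 0 < n) : n ≤ staircaseDelta n ^ 2 / 4 := by
  obtain ⟨r, s, -, -, rfl, hδ⟩ := exists_staircaseDelta_eq_add hn
  rw [hδ]
  exact mul_le_sq_add_div_four r s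

theorem staircaseDelta_sq_div_four {w : ℕ} (hw : 2 ≤ w) : staircaseDelta (w ^ 2 / 4) = w := by
  have hpos : 0 < w ^ 2 / 4 := sq_div_four_lt_sq_div_four hw (by omega : 0 < w)
  apply le_antisymm
  · calc
      staircaseDelta (w ^ 2 / 4) = staircaseDelta (w / 2 * ((w + 1) / 2)) := by
        rw [div_two_mul_add_one_div_two]
      _ ≤ w / 2 + (w + 1) / 2 := staircaseDelta_mul_le_add (by omega) (by omega)
      _ = w := by omega
  · by_contra! hlt
    exact (le_sq_staircaseDelta_div_four hpos).not_gt (sq_div_four_lt_sq_div_four hw hlt)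

theorem two_le_staircaseDelta {n : ℕ} (hn : 0 < n) : 2 ≤ staircaseDelta n := by
  obtain ⟨r, s, hr, hrs, -, hδ⟩ := exists_staircaseDelta_eq_add hn
  omega

theorem forall_staircaseDelta_lt_iff_exists_eq_sq_div_four {n : ℕ} (hn : 0 < n) :
    (∀ m : ℕ, n < m → staircaseDelta n < staircaseDelta m) ↔ ∃ w : ℕ, 2 ≤ w ∧ n = w ^ 2 / 4 := by
  constructor
  · intro hrec
    have hδ : 2 ≤ staircaseDelta n := two_le_staircaseDelta hn
    refine ⟨staircaseDelta n, hδ, (le_sq_staircaseDelta_div_four hn).eq_of_not_lt fun hlt ↦ ?_⟩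
    exact (hrec _ hlt).ne' (staircaseDelta_sq_div_four hδ)
  · rintro ⟨w, hw, rfl⟩ m hm
    rw [staircaseDelta_sq_div_four hw]
    by_contra! hle
    have hm_le : m ≤ w ^ 2 / 4 := calc
      m ≤ staircaseDelta m ^ 2 / 4 := le_sq_staircaseDelta_div_four (by omega)
      _ ≤ w ^ 2 / 4 := by gcongr
    exact hm_le.not_gt hm

/-- For a positive integer `n`, `δ(n) < δ(m)` for every `m > n` iff either
`n = k^2` (and then `δ(n) = 2k`) or `n = k^2 + k` (and then `δ(n) = 2k + 1`)
for some positive integer `k`. -/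
theorem stmt12 (n : ℕ) (hn : 0 < n) :
    (∀ m : ℕ, n < m → staircaseDelta n < staircaseDelta m) ↔
      (∃ k : ℕ, 0 < k ∧ n = k ^ 2 ∧ staircaseDelta n = 2 * k) ∨
      (∃ k : ℕ, 0 < k ∧ n = k ^ 2 + k ∧ staircaseDelta n = 2 * k + 1) := by
  rw [forall_staircaseDelta_lt_iff_exists_eq_sq_div_four hn]
  constructor
  · rintro ⟨w, hw, rfl⟩
    have hδ : staircaseDelta (w ^ 2 / 4) = w := staircaseDelta_sq_div_four hw
    obtain ⟨k, rfl | rfl⟩ := w.even_or_odd'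
    · exact Or.inl ⟨k, by omega, sq_two_mul_div_four k, hδ⟩
    · exact Or.inr ⟨k, by omega, sq_two_mul_add_one_div_four k, hδ⟩
  · rintro (⟨k, hk, rfl, -⟩ | ⟨k, hk, rfl, -⟩)
    · exact ⟨2 * k, by omega, (sq_two_mul_div_four k).symm⟩
    · exact ⟨2 * k + 1, by omega, (sq_two_mul_add_one_div_four k).symm⟩
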